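/- arXiv:2503.13785 — 2 statements merged into one kernel-verified Lean document; each statement's English description precedes it below -/
import Mathlib

section
/- For an n×n matrix A over a field k, the determinant of the induced linear map on the d-th symmetric power Sym^d(k^n) equals det(A)^m, where m = binomial(n+d-1, n). -/
open MvPolynomial

/-- Substitution attached to a matrix. -/
noncomputable def symSubst {k : Type*} [Field k] {n : ℕ} (A : Matrix (Fin n) (Fin n) k) :
    MvPolynomial (Fin n) k →ₐ[k] MvPolynomial (Fin n) k :=
  aeval fun i => ∑ j, A i j • (X j : MvPolynomial (Fin n) k)

lemma symSubst_X {k : Type*} [Field k] {n : ℕ} (A : Matrix (Fin n) (Fin n) k) (i : Fin n) :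
    symSubst A (X i) = ∑ j, A i j • X j := by
  simp [symSubst]

lemma symSubst_mul {k : Type*} [Field k] {n : ℕ} (A B : Matrix (Fin n) (Fin n) k) :
    symSubst (A * B) = (symSubst B).comp (symSubst A) := by
  apply MvPolynomial.algHom_ext
  intro i
  simp only [symSubst_X, AlgHom.comp_apply, map_sum, map_smul, Matrix.mul_apply, Finset.sum_smul,
    Finset.smul_sum, smul_smul]
  exact Finset.sum_comm

lemma symSubst_mem {k : Type*} [Field k] {n : ℕ} (d : ℕ) (A : Matrix (Fin n) (Fin n) k)
    (p : MvPolynomial (Fin n) k) (hp : p ∈ homogeneousSubmodule (Fin n) k d) :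
    (symSubst A).toLinearMap p ∈ homogeneousSubmodule (Fin n) k d := by
  rw [mem_homogeneousSubmodule] at hp ⊢
  have h := IsHomogeneous.aeval hp
    (fun i => ∑ j, A i j • (X j : MvPolynomial (Fin n) k)) (n := 1) ?_
  · rw [one_mul] at h
    exact h
  · intro i
    rw [← mem_homogeneousSubmodule]
    exact Submodule.sum_mem _ fun j _ => Submodule.smul_mem _ _ (isHomogeneous_X k j)

/-- Induced map on forms of degree `d`. -/
noncomputable def symMap {k : Type*} [Field k] {n : ℕ} (d : ℕ) (A : Matrix (Fin n) (Fin n) k) :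
    homogeneousSubmodule (Fin n) k d →ₗ[k] homogeneousSubmodule (Fin n) k d :=
  (symSubst A).toLinearMap.restrict (symSubst_mem d A)

lemma symMap_mul {k : Type*} [Field k] {n : ℕ} (d : ℕ) (A B : Matrix (Fin n) (Fin n) k) :
    symMap d (A * B) = symMap d B * symMap d A := by
  apply LinearMap.ext
  intro p
  apply Subtype.ext
  change symSubst (A * B) p.1 = symSubst B (symSubst A p.1)
  rw [symSubst_mul]
  rfl

lemma isHomogeneous_iff_antidiag {k : Type*} [Field k] {n d : ℕ} (s : Fin n →₀ ℕ) :
    s ∈ (Finset.univ.finsuppAntidiag d : Finset (Fin n →₀ ℕ)) ↔ s.degree = d := by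
  simp [Finset.mem_finsuppAntidiag, Finsupp.degree_eq_sum]

/-- Coordinates of forms. -/
noncomputable def symEquiv (k : Type*) [Field k] (n d : ℕ) :
    homogeneousSubmodule (Fin n) k d ≃ₗ[k]
      (↥(Finset.univ.finsuppAntidiag d : Finset (Fin n →₀ ℕ)) → k) where
  toFun p s := coeff s.1 p.1
  map_add' p q := by ext; simp
  map_smul' c p := by ext; simp
  invFun f := ⟨∑ s, monomial s.1 (f s), Submodule.sum_mem _ fun s _ =>
    isHomogeneous_monomial _ ((isHomogeneous_iff_antidiag (k := k) _).1 s.2)⟩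
  left_inv p := by
    apply Subtype.ext
    ext t
    simp only [coeff_sum, coeff_monomial]
    by_cases ht : t ∈ (Finset.univ.finsuppAntidiag d : Finset (Fin n →₀ ℕ))
    · rw [Finset.sum_eq_single ⟨t, ht⟩]
      · simp
      · intro b _ hb
        rw [if_neg]
        rintro rfl
        exact hb rfl
      · simp
    · rw [Finset.sum_eq_zero]
      · rw [isHomogeneous_iff_antidiag (k := k)] at ht
        exact (IsHomogeneous.coeff_eq_zero p.2 ht).symm
      · intro b _
        rw [if_neg]
        rintro rfl
        exact ht b.2
  right_inv f := by
    ext t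
    simp only [coeff_sum, coeff_monomial]
    rw [Finset.sum_eq_single t]
    · simp
    · intro b _ hb
      rw [if_neg]
      exact fun h => hb (Subtype.ext h)
    · simp

/-- Monomial basis of the forms of degree `d`. -/
noncomputable def symBasis (k : Type*) [Field k] (n d : ℕ) :
    Module.Basis (Finset.univ.finsuppAntidiag d : Finset (Fin n →₀ ℕ)) k
      (homogeneousSubmodule (Fin n) k d) :=
  Module.Basis.ofEquivFun (symEquiv k n d)

lemma symBasis_coe {k : Type*} [Field k] {n d : ℕ}
    (s : (Finset.univ.finsuppAntidiag d : Finset (Fin n →₀ ℕ))) :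
    (symBasis k n d s : MvPolynomial (Fin n) k) = monomial s.1 1 := by
  have : symBasis k n d s = ⟨monomial s.1 1, isHomogeneous_monomial _
      ((isHomogeneous_iff_antidiag (k := k) _).1 s.2)⟩ := by
    rw [symBasis, Module.Basis.coe_ofEquivFun, LinearEquiv.symm_apply_eq]
    ext t
    change _ = coeff t.1 (monomial s.1 1)
    rw [coeff_monomial, Pi.single_apply]
    simp only [Subtype.ext_iff, eq_comm]
  rw [this]

lemma symMatrix_apply {k : Type*} [Field k] {n d : ℕ} (A : Matrix (Fin n) (Fin n) k)
    (t s : (Finset.univ.finsuppAntidiag d : Finset (Fin n →₀ ℕ))) :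
    LinearMap.toMatrix (symBasis k n d) (symBasis k n d) (symMap d A) t s
      = coeff t.1 (symSubst A (monomial s.1 1)) := by
  rw [LinearMap.toMatrix_apply, ← symBasis_coe s]
  rfl

lemma symSubst_monomial {k : Type*} [Field k] {n : ℕ} (A : Matrix (Fin n) (Fin n) k)
    (s : Fin n →₀ ℕ) :
    symSubst A (monomial s 1) = ∏ l, (∑ j, A l j • (X j : MvPolynomial (Fin n) k)) ^ s l := by
  rw [symSubst, aeval_monomial, map_one, one_mul, Finsupp.prod_fintype]
  simp

lemma sum_antidiag_apply (n d : ℕ) (i : Fin n) :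
    ∑ s ∈ (Finset.univ.finsuppAntidiag d : Finset (Fin n →₀ ℕ)), s i
      = Nat.choose (n + d - 1) n := by
  have hsym : ∀ j, ∑ s ∈ (Finset.univ.finsuppAntidiag d : Finset (Fin n →₀ ℕ)), s j
      = ∑ s ∈ (Finset.univ.finsuppAntidiag d : Finset (Fin n →₀ ℕ)), s i := by
    intro j
    refine Finset.sum_equiv (Finsupp.domCongr (Equiv.swap i j)).toEquiv ?_ ?_
    · intro s
      simp only [Finset.mem_finsuppAntidiag, Finset.subset_univ, and_true]
      have : ∑ x, ((Finsupp.domCongr (Equiv.swap i j)).toEquiv s) x = ∑ x, s x := by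
        simpa using Equiv.sum_comp (Equiv.swap i j) s
      rw [this]
    · intro s _
      simp
  have htot : n * ∑ s ∈ (Finset.univ.finsuppAntidiag d : Finset (Fin n →₀ ℕ)), s i
      = d * Nat.choose (n + d - 1) d := by
    have h1 : ∑ j, ∑ s ∈ (Finset.univ.finsuppAntidiag d : Finset (Fin n →₀ ℕ)), s j
        = ∑ s ∈ (Finset.univ.finsuppAntidiag d : Finset (Fin n →₀ ℕ)), d := by
      rw [Finset.sum_comm]
      exact Finset.sum_congr rfl fun s hs => (Finset.mem_finsuppAntidiag.1 hs).1
    rw [Finset.sum_congr rfl fun j _ => hsym j] at h1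
    simp only [Finset.sum_const, Finset.card_univ, Fintype.card_fin, smul_eq_mul,
      Finset.card_finsuppAntidiag_nat_eq_choose] at h1
    rw [h1, mul_comm]
  have hn : 0 < n := i.pos
  apply Nat.eq_of_mul_eq_mul_left hn
  rw [htot]
  obtain ⟨m, rfl⟩ : ∃ m, n = m + 1 := ⟨n - 1, by omega⟩
  rcases d with _ | e
  · simp
  · have h1 := Nat.add_one_mul_choose_eq (m + e) m
    have h2 := Nat.add_one_mul_choose_eq (m + e) e
    have h3 : (m + e).choose m = (m + e).choose e := Nat.choose_symm_add
    have h4 : m + 1 + (e + 1) - 1 = m + e + 1 := by omega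
    rw [h4]
    rw [h3] at h1
    linarith

lemma det_symMap_diagonal {k : Type*} [Field k] {n : ℕ} (d : ℕ) (D : Fin n → k) :
    LinearMap.det (symMap d (Matrix.diagonal D))
      = (Matrix.diagonal D).det ^ Nat.choose (n + d - 1) n := by
  have hM : LinearMap.toMatrix (symBasis k n d) (symBasis k n d) (symMap d (Matrix.diagonal D))
      = Matrix.diagonal fun s => ∏ l, D l ^ s.1 l := by
    ext t s
    rw [symMatrix_apply, symSubst_monomial]
    have h : ∀ l, (∑ j, Matrix.diagonal D l j • (X j : MvPolynomial (Fin n) k)) = C (D l) * X l := by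
      intro l
      rw [Finset.sum_eq_single l]
      · simp [smul_eq_C_mul]
      · intro b _ hb
        simp [Matrix.diagonal_apply_ne _ hb.symm]
      · simp
    simp only [h, mul_pow, Finset.prod_mul_distrib]
    have h2 : (∏ l, (X l : MvPolynomial (Fin n) k) ^ s.1 l) = monomial s.1 1 := by
      rw [monomial_eq, Finsupp.prod_fintype]
      · simp
      · simp
    rw [h2]
    simp only [← C_pow, ← map_prod, coeff_C_mul, coeff_monomial, Matrix.diagonal_apply]
    by_cases hts : t = s
    · simp [hts]
    · rw [if_neg hts, if_neg (fun h => hts (Subtype.ext h.symm)), mul_zero]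
  rw [← LinearMap.det_toMatrix (symBasis k n d), hM, Matrix.det_diagonal, Matrix.det_diagonal,
    Finset.prod_comm, ← Finset.prod_pow]
  refine Finset.prod_congr rfl fun l _ => ?_
  rw [Finset.prod_pow_eq_pow_sum, Finset.univ_eq_attach,
    Finset.sum_attach (Finset.univ.finsuppAntidiag d) (fun s => s l), sum_antidiag_apply]

lemma symSubst_transvection {k : Type*} [Field k] {n : ℕ} (i j : Fin n) (hij : i ≠ j) (c : k)
    (s t : Fin n →₀ ℕ) (hst : s i ≤ t i) :
    coeff t (symSubst (Matrix.transvection i j c) (monomial s 1)) = coeff t (monomial s (1 : k)) := by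
  have hl : ∀ l, l ≠ i → symSubst (Matrix.transvection i j c) (X l) = X l := by
    intro l hl
    rw [symSubst_X, Finset.sum_eq_single l]
    · simp [Matrix.transvection, Matrix.single_apply, hl.symm]
    · intro b _ hb
      simp [Matrix.transvection, Matrix.single_apply, hl.symm, Matrix.one_apply, hb.symm]
    · simp
  have hi : symSubst (Matrix.transvection i j c) (X i) = monomial (Finsupp.single j 1) c + X i := by
    rw [symSubst_X]
    simp [Matrix.transvection, add_smul, Finset.sum_add_distrib, Matrix.one_apply,
      Matrix.single_apply, ite_smul, X, smul_monomial, add_comm]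
  have hs : (monomial s (1 : k)) = monomial (s.erase i) 1 * X i ^ s i := by
    rw [X_pow_eq_monomial, monomial_mul, Finsupp.erase_add_single, one_mul]
  have he : symSubst (Matrix.transvection i j c) (monomial (s.erase i) 1)
      = monomial (s.erase i) 1 := by
    have h2 : (monomial (s.erase i) (1 : k)) = ∏ l, X l ^ (s.erase i l) := by
      rw [monomial_eq, Finsupp.prod_fintype]
      · simp
      · simp
    rw [h2, map_prod]
    refine Finset.prod_congr rfl fun l _ => ?_
    by_cases h : l = i
    · simp [h]
    · rw [map_pow, hl l h]
  rw [hs, map_mul, map_pow, he, hi, add_comm, add_pow, Finset.sum_range_succ, mul_add, coeff_add]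
  simp only [Nat.sub_self, pow_zero, mul_one, Nat.choose_self, Nat.cast_one]
  rw [Finset.mul_sum, coeff_sum, Finset.sum_eq_zero, zero_add]
  intro m hm
  rw [Finset.mem_range] at hm
  rw [X_pow_eq_monomial, monomial_pow, monomial_mul, ← C_eq_coe_nat, mul_comm (monomial _ _) (C _),
    C_mul_monomial, monomial_mul, coeff_monomial, if_neg]
  intro h
  have := DFunLike.congr_fun h i
  simp [hij] at this
  omega

lemma det_symMap_transvection {k : Type*} [Field k] {n : ℕ} (d : ℕ) (i j : Fin n) (hij : i ≠ j)
    (c : k) : LinearMap.det (symMap d (Matrix.transvection i j c)) = 1 := by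
  rw [← LinearMap.det_toMatrix (symBasis k n d)]
  have hM : Matrix.BlockTriangular (LinearMap.toMatrix (symBasis k n d) (symBasis k n d)
      (symMap d (Matrix.transvection i j c))) (fun s => s.1 i) := by
    intro t s hts
    rw [symMatrix_apply, symSubst_transvection i j hij c _ _ (le_of_lt hts), coeff_monomial, if_neg]
    intro h
    simp only [h] at hts
    exact lt_irrefl _ hts
  rw [hM.det]
  refine Finset.prod_eq_one fun a _ => ?_
  rw [show Matrix.toSquareBlock _ _ a = 1 from ?_, Matrix.det_one]
  ext t s
  rw [Matrix.toSquareBlock_def, Matrix.of_apply, symMatrix_apply,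
    symSubst_transvection i j hij c _ _ (s.2.trans t.2.symm).le, coeff_monomial, Matrix.one_apply]
  simp only [Subtype.ext_iff, eq_comm]

lemma det_symMap {k : Type*} [Field k] {n : ℕ} (d : ℕ) (A : Matrix (Fin n) (Fin n) k) :
    LinearMap.det (symMap d A) = A.det ^ Nat.choose (n + d - 1) n := by
  refine Matrix.diagonal_transvection_induction
    (fun A => LinearMap.det (symMap d A) = A.det ^ Nat.choose (n + d - 1) n) A ?_ ?_ ?_
  · intro D _
    exact det_symMap_diagonal d D
  · intro t
    rw [Matrix.TransvectionStruct.det, one_pow]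
    exact det_symMap_transvection d t.i t.j t.hij t.c
  · intro A B hA hB
    rw [symMap_mul, map_mul, hA, hB, Matrix.det_mul, mul_pow, mul_comm]

/-- For an `n×n` matrix `A` over a field `k`, the determinant of the induced linear map
on the `d`-th symmetric power `Sym^d(k^n)` — realized as the space of homogeneous
polynomials of degree `d` in `n` variables, on which `A` acts by the linear substitution
`X i ↦ ∑ j, A i j • X j` — equals `det(A) ^ m` where `m = (n + d - 1).choose n`. -/
theorem det_symmetricPower {k : Type*} [Field k] (n d : ℕ) (A : Matrix (Fin n) (Fin n) k)
    (hpres : ∀ p ∈ homogeneousSubmodule (Fin n) k d,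
      (aeval fun i => ∑ j, A i j • (X j : MvPolynomial (Fin n) k)) p
        ∈ homogeneousSubmodule (Fin n) k d) :
    LinearMap.det
      ((aeval fun i => ∑ j, A i j • (X j : MvPolynomial (Fin n) k)).toLinearMap.restrict hpres)
      = A.det ^ Nat.choose (n + d - 1) n := by
  exact det_symMap d A
end

section
/- Let L ∈ D = C(x)[τ] have order n and L^(p) (the p-th section operator, ψ_p⁻¹ of the minimal operator of 1 in (D/DL) restricted to D_p = C(x)[τ^p]) also have order n. If D/DL ≅ D/DL̃ for some L̃ ∈ D_p, then (D/DL) viewed as a D_p-module decomposes as a direct sum ⊕_{i=0}^{p-1} M_i, where M_i is the C(x)-span of {τ^j : j ≡ i mod p, 0 ≤ j < n} inside D/DL̃, and each M_i is a D_p-submodule isomorphic to D_p/D_p·L̃_i where L̃_i = τ^i L̃ τ^{-i}. -/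
set_option maxHeartbeats 2000000
set_option synthInstance.maxHeartbeats 1000000

/-- `ℂ(x)`, the field of rational functions. -/
noncomputable abbrev F := RatFunc ℂ

/-- Left multiplication by a rational function, as a `ℂ`-linear endomorphism of `ℂ(x)`. -/
noncomputable def mulL (f : F) : Module.End ℂ F := Algebra.lmul ℂ F f

/-- The shift `τ : f(x) ↦ f(x+1)` as a `ℂ`-linear endomorphism of `ℂ(x)`. -/
noncomputable def shiftE (σ : F ≃ₐ[ℂ] F) : Module.End ℂ F := σ.toLinearMap

/-- The inverse shift `τ⁻¹ : f(x) ↦ f(x-1)`. -/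
noncomputable def shiftInvE (σ : F ≃ₐ[ℂ] F) : Module.End ℂ F := σ.symm.toLinearMap

/-- `σ` is the shift automorphism `f(x) ↦ f(x+1)` of `ℂ(x)`. -/
def IsShiftA (σ : F ≃ₐ[ℂ] F) : Prop :=
  ∀ q : Polynomial ℂ, σ (algebraMap (Polynomial ℂ) F q)
    = algebraMap (Polynomial ℂ) F (q.comp (Polynomial.X + 1))

/-- `sc` is the rescaling homomorphism `f(x) ↦ f(x/p)` of `ℂ(x)`. -/
def IsScale (p : ℕ) (sc : F →+* F) : Prop :=
  ∀ q : Polynomial ℂ, sc (algebraMap (Polynomial ℂ) F q)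
    = algebraMap (Polynomial ℂ) F (q.comp (Polynomial.C ((p : ℂ)⁻¹) * Polynomial.X))

/-- Generators of `D_p = ℂ(x)[τᵖ]`. -/
noncomputable def Dgen (σ : F ≃ₐ[ℂ] F) (p : ℕ) : Set (Module.End ℂ F) :=
  Set.range mulL ∪ {shiftE σ ^ p}

/-- The ring `D_p = ℂ(x)[τᵖ]`, realized as a subring of the `ℂ`-linear endomorphisms of
`ℂ(x)`; `D = Dop σ 1`. -/
noncomputable def Dop (σ : F ≃ₐ[ℂ] F) (p : ℕ) : Subring (Module.End ℂ F) :=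
  Subring.closure (Dgen σ p)

lemma Dop_le (σ : F ≃ₐ[ℂ] F) (p : ℕ) : Dop σ p ≤ Dop σ 1 := by
  apply Subring.closure_le.2
  rintro x (hx | rfl)
  · exact Subring.subset_closure (Or.inl hx)
  · refine pow_mem ?_ p
    have h : shiftE σ ^ 1 ∈ Dop σ 1 := Subring.subset_closure (Or.inr rfl)
    simpa using h

lemma shiftE_mem (σ : F ≃ₐ[ℂ] F) : shiftE σ ∈ Dop σ 1 := by
  have h : shiftE σ ^ 1 ∈ Dop σ 1 := Subring.subset_closure (Or.inr rfl)
  simpa using h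

/-- `ℂ(x) ↪ D`, rational functions as multiplication operators. -/
noncomputable def iota (σ : F ≃ₐ[ℂ] F) : F →+* Dop σ 1 where
  toFun f := ⟨mulL f, Subring.subset_closure (Or.inl ⟨f, rfl⟩)⟩
  map_one' := Subtype.ext (by simp [mulL, map_one])
  map_mul' f g := Subtype.ext (by simp [mulL, map_mul])
  map_zero' := Subtype.ext (by simp [mulL, map_zero])
  map_add' f g := Subtype.ext (by simp [mulL, map_add])

/-- `L` is the operator `∑ᵢ aᵢ τⁱ` (with `i ≤ m`). -/
noncomputable def HasRep (σ : F ≃ₐ[ℂ] F) (L : Module.End ℂ F) (m : ℕ)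
    (a : Fin (m + 1) → F) : Prop :=
  L = ∑ i : Fin (m + 1), mulL (a i) * shiftE σ ^ (i : ℕ)

/-- The cyclic left `D`-module `D/DL`. -/
noncomputable abbrev QuotD (σ : F ≃ₐ[ℂ] F) (L : Dop σ 1) :=
  (Dop σ 1) ⧸ Submodule.span (Dop σ 1) {L}

lemma mulL_mul (f : F) (A : Module.End ℂ F) : mulL f * A = f • A := by
  ext x; simp [mulL]

lemma smul_mulE (f : F) (A B : Module.End ℂ F) : (f • A) * B = f • (A * B) := by
  ext x; simp

lemma shiftE_pow_apply (σ : F ≃ₐ[ℂ] F) (k : ℕ) (x : F) : (shiftE σ ^ k) x = (σ ^ k) x := by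
  induction k generalizing x with
  | zero => simp
  | succ k ih => rw [pow_succ, pow_succ, Module.End.mul_apply, AlgEquiv.mul_apply, ih]; rfl

lemma shiftE_pow_smul (σ : F ≃ₐ[ℂ] F) (k : ℕ) (f : F) (A : Module.End ℂ F) :
    shiftE σ ^ k * (f • A) = ((σ ^ k) f) • (shiftE σ ^ k * A) := by
  ext x; simp [shiftE_pow_apply]

lemma shift_inv_pow (σ : F ≃ₐ[ℂ] F) (k : ℕ) : shiftInvE σ ^ k * shiftE σ ^ k = 1 := by
  have h1 : shiftInvE σ * shiftE σ = 1 := by ext x; simp [shiftE, shiftInvE]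
  have h2 : shiftE σ * shiftInvE σ = 1 := by ext x; simp [shiftE, shiftInvE]
  have hc : Commute (shiftInvE σ) (shiftE σ) := by rw [Commute, SemiconjBy, h1, h2]
  rw [← hc.mul_pow, h1, one_pow]

lemma shift_pow_inv (σ : F ≃ₐ[ℂ] F) (k : ℕ) : shiftE σ ^ k * shiftInvE σ ^ k = 1 := by
  have h1 : shiftInvE σ * shiftE σ = 1 := by ext x; simp [shiftE, shiftInvE]
  have h2 : shiftE σ * shiftInvE σ = 1 := by ext x; simp [shiftE, shiftInvE]
  have hc : Commute (shiftE σ) (shiftInvE σ) := by rw [Commute, SemiconjBy, h1, h2]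
  rw [← hc.mul_pow, h2, one_pow]

lemma sigma_pow_X (σ : F ≃ₐ[ℂ] F) (hσ : IsShiftA σ) (k : ℕ) :
    (σ ^ k) (RatFunc.X : F) = RatFunc.X + (k : F) := by
  have h1 : σ (RatFunc.X : F) = RatFunc.X + 1 := by
    have := hσ Polynomial.X
    simpa [RatFunc.algebraMap_X] using this
  induction k with
  | zero => simp
  | succ k ih =>
    rw [pow_succ', AlgEquiv.mul_apply, ih, map_add, h1, map_natCast]; push_cast; ring

lemma linInd (σ : F ≃ₐ[ℂ] F) (hσ : IsShiftA σ) :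
    LinearIndependent F (fun k : ℕ => shiftE σ ^ k) := by
  let g : ℕ → (F →* F) := fun k => ((σ ^ k : F ≃ₐ[ℂ] F) : F →* F)
  have hg : Function.Injective g := by
    intro a b hab
    have h := DFunLike.congr_fun hab (RatFunc.X : F)
    have h' : (σ ^ a) (RatFunc.X : F) = (σ ^ b) (RatFunc.X : F) := h
    rw [sigma_pow_X σ hσ, sigma_pow_X σ hσ] at h'
    exact_mod_cast add_left_cancel h'
  have h := (linearIndependent_monoidHom F F).comp g hg
  let c : Module.End ℂ F →ₗ[F] (F → F) :=
    { toFun := fun A => A, map_add' := fun _ _ => rfl, map_smul' := fun _ _ => rfl }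
  apply LinearIndependent.of_comp c
  have e : (c ∘ fun k : ℕ => shiftE σ ^ k) = ((fun f : F →* F => (f : F → F)) ∘ g) := by
    funext k x
    exact shiftE_pow_apply σ k x
  rw [e]
  exact h

/-- Span of powers of the shift in a residue class. -/
noncomputable def V (σ : F ≃ₐ[ℂ] F) (p i : ℕ) : Submodule F (Module.End ℂ F) :=
  Submodule.span F {x | ∃ k : ℕ, k % p = i ∧ x = shiftE σ ^ k}

lemma pow_mem_V (σ : F ≃ₐ[ℂ] F) (p k : ℕ) : shiftE σ ^ k ∈ V σ p (k % p) :=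
  Submodule.subset_span ⟨k, rfl, rfl⟩

lemma V_mul (σ : F ≃ₐ[ℂ] F) (p i j : ℕ) (d e : Module.End ℂ F) (hd : d ∈ V σ p i)
    (he : e ∈ V σ p j) : d * e ∈ V σ p ((i + j) % p) := by
  induction hd using Submodule.span_induction with
  | mem x hx =>
    obtain ⟨k, hk, rfl⟩ := hx
    induction he using Submodule.span_induction with
    | mem y hy =>
      obtain ⟨l, hl, rfl⟩ := hy
      rw [← pow_add, ← hk, ← hl, ← Nat.add_mod]
      exact pow_mem_V σ p _
    | zero => rw [mul_zero]; exact zero_mem _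
    | add x y _ _ h1 h2 => rw [mul_add]; exact add_mem h1 h2
    | smul a x _ h => rw [shiftE_pow_smul]; exact Submodule.smul_mem _ _ h
  | zero => rw [zero_mul]; exact zero_mem _
  | add x y _ _ h1 h2 => rw [add_mul]; exact add_mem h1 h2
  | smul a x _ h => rw [smul_mulE]; exact Submodule.smul_mem _ _ h

lemma mem_Dop_iff (σ : F ≃ₐ[ℂ] F) (p : ℕ) (d : Module.End ℂ F) :
    d ∈ Dop σ p ↔ d ∈ V σ p 0 := by
  have h1 : (1 : Module.End ℂ F) ∈ V σ p 0 := by simpa using pow_mem_V σ p 0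
  constructor
  · intro h
    induction h using Subring.closure_induction with
    | mem x hx =>
      rcases hx with ⟨f, rfl⟩ | rfl
      · rw [← mul_one (mulL f), mulL_mul]
        exact Submodule.smul_mem _ _ h1
      · simpa using pow_mem_V σ p p
    | zero => exact zero_mem _
    | one => exact h1
    | add x y _ _ hx hy => exact add_mem hx hy
    | neg x _ hx => exact neg_mem hx
    | mul x y _ _ hx hy => simpa using V_mul σ p 0 0 x y hx hy
  · intro h
    induction h using Submodule.span_induction with
    | mem x hx =>
      obtain ⟨k, hk, rfl⟩ := hx
      obtain ⟨m, rfl⟩ := Nat.dvd_of_mod_eq_zero hk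
      rw [pow_mul]
      have hp : shiftE σ ^ p ∈ Dop σ p := Subring.subset_closure (Or.inr rfl)
      exact pow_mem hp m
    | zero => exact zero_mem _
    | add x y _ _ hx hy => exact add_mem hx hy
    | smul a x _ hx =>
      rw [← mulL_mul]
      exact mul_mem (Subring.subset_closure (Or.inl ⟨a, rfl⟩)) hx

lemma V_le (σ : F ≃ₐ[ℂ] F) (p i : ℕ) (d : Module.End ℂ F) (hd : d ∈ V σ p i) :
    d ∈ Dop σ 1 := by
  rw [mem_Dop_iff]
  refine Submodule.span_mono ?_ hd
  rintro x ⟨k, _, rfl⟩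
  exact ⟨k, Nat.mod_one k, rfl⟩

/-- Elements of `V i` factor as an element of `D_p` times `τ^i`. -/
lemma V_factor (σ : F ≃ₐ[ℂ] F) (p i : ℕ) (d : Module.End ℂ F) (hd : d ∈ V σ p i) :
    ∃ e ∈ Dop σ p, d = e * shiftE σ ^ i := by
  induction hd using Submodule.span_induction with
  | mem x hx =>
    obtain ⟨k, hk, rfl⟩ := hx
    refine ⟨shiftE σ ^ (p * (k / p)), ?_, ?_⟩
    · rw [mem_Dop_iff]; simpa using pow_mem_V σ p (p * (k / p))
    · rw [← pow_add, ← hk, Nat.div_add_mod]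
  | zero => exact ⟨0, zero_mem _, by simp⟩
  | add x y _ _ hx hy =>
    obtain ⟨a, ha, rfl⟩ := hx
    obtain ⟨b, hb, rfl⟩ := hy
    exact ⟨a + b, add_mem ha hb, by rw [add_mul]⟩
  | smul f x _ hx =>
    obtain ⟨a, ha, rfl⟩ := hx
    refine ⟨f • a, ?_, by rw [smul_mulE]⟩
    rw [mem_Dop_iff] at ha ⊢
    exact Submodule.smul_mem _ _ ha

lemma exists_proj (σ : F ≃ₐ[ℂ] F) (hσ : IsShiftA σ) (p i : ℕ) :
    ∃ P : Module.End ℂ F →ₗ[F] Module.End ℂ F,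
      (∀ k : ℕ, P (shiftE σ ^ k) = if k % p = i then shiftE σ ^ k else 0) := by
  obtain ⟨π, hπ⟩ := LinearMap.exists_leftInverse_of_injective
    (Finsupp.linearCombination F (fun k : ℕ => shiftE σ ^ k))
    (LinearMap.ker_eq_bot.2 (linInd σ hσ))
  refine ⟨(Finsupp.linearCombination F
    (fun k : ℕ => if k % p = i then shiftE σ ^ k else 0)) ∘ₗ π, fun k => ?_⟩
  have h := LinearMap.congr_fun hπ (Finsupp.single k 1)
  simp only [LinearMap.comp_apply, Finsupp.linearCombination_single, one_smul,
    LinearMap.id_apply] at h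
  rw [LinearMap.comp_apply, h, Finsupp.linearCombination_single, one_smul]

/-- The projection to the residue class `i`. -/
noncomputable def pr (σ : F ≃ₐ[ℂ] F) (hσ : IsShiftA σ) (p i : ℕ) :
    Module.End ℂ F →ₗ[F] Module.End ℂ F := (exists_proj σ hσ p i).choose

lemma pr_pow (σ : F ≃ₐ[ℂ] F) (hσ : IsShiftA σ) (p i k : ℕ) :
    pr σ hσ p i (shiftE σ ^ k) = if k % p = i then shiftE σ ^ k else 0 :=
  (exists_proj σ hσ p i).choose_spec k

lemma pr_self (σ : F ≃ₐ[ℂ] F) (hσ : IsShiftA σ) (p i : ℕ) (d : Module.End ℂ F)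
    (hd : d ∈ V σ p i) : pr σ hσ p i d = d := by
  induction hd using Submodule.span_induction with
  | mem x hx => obtain ⟨k, hk, rfl⟩ := hx; rw [pr_pow, if_pos hk]
  | zero => simp
  | add x y _ _ hx hy => rw [map_add, hx, hy]
  | smul f x _ hx => rw [map_smul, hx]

lemma pr_other (σ : F ≃ₐ[ℂ] F) (hσ : IsShiftA σ) (p i j : ℕ) (hij : j ≠ i)
    (d : Module.End ℂ F) (hd : d ∈ V σ p j) : pr σ hσ p i d = 0 := by
  induction hd using Submodule.span_induction with
  | mem x hx =>
    obtain ⟨k, hk, rfl⟩ := hx; rw [pr_pow, if_neg]; rw [hk]; exact hij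
  | zero => simp
  | add x y _ _ hx hy => rw [map_add, hx, hy, add_zero]
  | smul f x _ hx => rw [map_smul, hx, smul_zero]

lemma pr_mem (σ : F ≃ₐ[ℂ] F) (hσ : IsShiftA σ) (p i : ℕ) (d : Module.End ℂ F)
    (hd : d ∈ Dop σ 1) : pr σ hσ p i d ∈ V σ p i := by
  rw [mem_Dop_iff] at hd
  induction hd using Submodule.span_induction with
  | mem x hx =>
    obtain ⟨k, hk, rfl⟩ := hx; rw [pr_pow]
    split_ifs with h
    · exact Submodule.subset_span ⟨k, h, rfl⟩
    · exact zero_mem _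
  | zero => simp
  | add x y _ _ hx hy => rw [map_add]; exact add_mem hx hy
  | smul f x _ hx => rw [map_smul]; exact Submodule.smul_mem _ _ hx

lemma pr_mul (σ : F ≃ₐ[ℂ] F) (hσ : IsShiftA σ) (p i : ℕ) (d l : Module.End ℂ F)
    (hd : d ∈ Dop σ 1) (hl : l ∈ Dop σ p) : pr σ hσ p i (d * l) = pr σ hσ p i d * l := by
  rw [mem_Dop_iff] at hd hl
  induction hd using Submodule.span_induction with
  | mem x hx =>
    obtain ⟨k, hk, rfl⟩ := hx; rw [pr_pow]
    have h := V_mul σ p _ _ _ _ (pow_mem_V σ p k) hl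
    rw [add_zero, Nat.mod_mod] at h
    split_ifs with h'
    · subst h'; exact pr_self σ hσ p _ _ h
    · rw [zero_mul]; exact pr_other σ hσ p _ _ h' _ h
  | zero => simp
  | add x y _ _ hx hy => rw [map_add, add_mul, add_mul, map_add, hx, hy]
  | smul f x _ hx => rw [map_smul, smul_mulE, smul_mulE, map_smul, hx]

lemma rep_coeff (σ : F ≃ₐ[ℂ] F) (hσ : IsShiftA σ) (p n : ℕ) (l : Module.End ℂ F)
    (hl : l ∈ Dop σ p) (a : Fin (n + 1) → F) (hrep : HasRep σ l n a) (j : Fin (n + 1))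
    (hj : a j ≠ 0) : (j : ℕ) % p = 0 := by
  by_contra hne
  have hl' := hl
  rw [mem_Dop_iff] at hl'
  have h := pr_self σ hσ p 0 l hl'
  have hsum : l = ∑ i : Fin (n + 1), a i • shiftE σ ^ (i : ℕ) := by
    rw [HasRep] at hrep; rw [hrep]; simp only [mulL_mul]
  rw [hsum, map_sum] at h
  simp only [map_smul, pr_pow] at h
  have h2 : ∑ i : Fin (n + 1), (if (i : ℕ) % p = 0 then 0 else a i) • shiftE σ ^ (i : ℕ) = 0 := by
    have : ∀ i : Fin (n + 1), (if (i : ℕ) % p = 0 then 0 else a i) • shiftE σ ^ (i : ℕ)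
        = a i • shiftE σ ^ (i : ℕ) - a i • (if (i : ℕ) % p = 0 then shiftE σ ^ (i : ℕ) else 0) := by
      intro i; split_ifs <;> simp
    rw [Finset.sum_congr rfl (fun i _ => this i), Finset.sum_sub_distrib, h, sub_self]
  have hli := (linInd σ hσ).comp (fun i : Fin (n + 1) => (i : ℕ)) Fin.val_injective
  have := Fintype.linearIndependent_iff.1 hli _ h2 j
  rw [if_neg hne] at this
  exact hj this

lemma mem_ideal (σ : F ≃ₐ[ℂ] F) {p : ℕ} (l w : Dop σ p) :
    w ∈ Submodule.span (Dop σ p) {l} ↔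
      ∃ e ∈ Dop σ p, e * (l : Module.End ℂ F) = (w : Module.End ℂ F) := by
  rw [Submodule.mem_span_singleton]
  constructor
  · rintro ⟨a, rfl⟩; exact ⟨a, a.2, rfl⟩
  · rintro ⟨e, he, h⟩; exact ⟨⟨e, he⟩, Subtype.ext h⟩

lemma mk_zero_iff (σ : F ≃ₐ[ℂ] F) (l w : Module.End ℂ F) (hl : l ∈ Dop σ 1)
    (hw : w ∈ Dop σ 1) :
    (Submodule.Quotient.mk (⟨w, hw⟩ : Dop σ 1) : QuotD σ ⟨l, hl⟩) = 0 ↔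
      ∃ e ∈ Dop σ 1, e * l = w := by
  rw [Submodule.Quotient.mk_eq_zero, mem_ideal]

lemma incl_mul_aux (σ : F ≃ₐ[ℂ] F) (p : ℕ) (w : Module.End ℂ F)
    (hw : w ∈ Dop σ 1) (d : Dop σ p) (hdw : (d : Module.End ℂ F) * w ∈ Dop σ 1) :
    Subring.inclusion (Dop_le σ p) d * (⟨w, hw⟩ : Dop σ 1)
      = (⟨(d : Module.End ℂ F) * w, hdw⟩ : Dop σ 1) := by
  apply Subtype.ext
  rw [Subring.coe_mul, Subring.coe_inclusion]

lemma smul_mk_mul (σ : F ≃ₐ[ℂ] F) (l c w : Dop σ 1) :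
    c • (Submodule.Quotient.mk w : QuotD σ l) = Submodule.Quotient.mk (c * w) := by
  rw [← Submodule.Quotient.mk_smul, smul_eq_mul]

lemma smul_mk_aux (σ : F ≃ₐ[ℂ] F) (p : ℕ) (l w : Module.End ℂ F) (hl : l ∈ Dop σ 1)
    (hw : w ∈ Dop σ 1) (d : Dop σ p) (hdw : (d : Module.End ℂ F) * w ∈ Dop σ 1) :
    Subring.inclusion (Dop_le σ p) d •
      (Submodule.Quotient.mk (⟨w, hw⟩ : Dop σ 1) : QuotD σ ⟨l, hl⟩)
      = Submodule.Quotient.mk (⟨(d : Module.End ℂ F) * w, hdw⟩ : Dop σ 1) := by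
  rw [smul_mk_mul, incl_mul_aux σ p w hw d hdw]

lemma conj_aux (σ : F ≃ₐ[ℂ] F) (hσ : IsShiftA σ) (p i : ℕ) (hi : i < p)
    (Lt d : Module.End ℂ F) (hLtp : Lt ∈ Dop σ p) (hd : d ∈ Dop σ p) :
    (∃ e ∈ Dop σ 1, e * Lt = d * shiftE σ ^ i) ↔
      ∃ e ∈ Dop σ p, e * (shiftE σ ^ i * Lt * shiftInvE σ ^ i) = d := by
  constructor
  · rintro ⟨e, he, h⟩
    have hV : d * shiftE σ ^ i ∈ V σ p i := by
      have := V_mul σ p _ _ _ _ ((mem_Dop_iff σ p d).1 hd) (pow_mem_V σ p i)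
      rwa [zero_add, Nat.mod_mod, Nat.mod_eq_of_lt hi] at this
    have h3 := pr_mul σ hσ p i e Lt he hLtp
    rw [h, pr_self σ hσ p i _ hV] at h3
    obtain ⟨e', he', h4⟩ := V_factor σ p i _ (pr_mem σ hσ p i e he)
    rw [h4] at h3
    refine ⟨e', he', ?_⟩
    rw [← mul_assoc, ← mul_assoc, ← h3, mul_assoc, shift_pow_inv, mul_one]
  · rintro ⟨a, ha, rfl⟩
    refine ⟨a * shiftE σ ^ i, mul_mem (Dop_le σ p ha) (pow_mem (shiftE_mem σ) _), ?_⟩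
    rw [mul_assoc a _ (shiftE σ ^ i), mul_assoc (shiftE σ ^ i * Lt), shift_inv_pow, mul_one,
      mul_assoc]

lemma lift_aux {R M N : Type*} [Ring R] [AddCommGroup M] [AddCommGroup N] [Module R M]
    [Module R N] (S : Submodule R M) (Ψ : M →ₗ[R] N) (h1 : S ≤ LinearMap.ker Ψ)
    (h2 : LinearMap.ker Ψ ≤ S) (K : Set N) (h3 : ∀ d, Ψ d ∈ K) (h4 : ∀ x ∈ K, ∃ d, Ψ d = x) :
    ∃ Φ : (M ⧸ S) →ₗ[R] N, Function.Injective Φ ∧ Set.range Φ = K := by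
  refine ⟨S.liftQ Ψ h1, ?_, ?_⟩
  · rw [← LinearMap.ker_eq_bot]
    exact Submodule.ker_liftQ_eq_bot _ _ _ h2
  · ext x
    constructor
    · rintro ⟨y, rfl⟩
      obtain ⟨d, rfl⟩ := Submodule.Quotient.mk_surjective _ y
      exact h3 d
    · intro hx
      obtain ⟨d, rfl⟩ := h4 x hx
      exact ⟨Submodule.Quotient.mk d, rfl⟩

/-- **Decomposition of the restriction.** Let `L ∈ D = ℂ(x)[τ]` have order `n` and let the
section operator `L⁽ᵖ⁾` also have order `n`. If `D/DL ≅ D/DL̃` for some `L̃ ∈ D_p`, then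
`D/DL̃`, viewed as a `D_p`-module, decomposes as the direct sum of the `ℂ(x)`-spans `Mᵢ`
of `{τʲ : j ≡ i mod p, 0 ≤ j < n}` (`0 ≤ i < p`), each `Mᵢ` being a `D_p`-submodule
isomorphic to `D_p/D_p·L̃ᵢ` where `L̃ᵢ = τⁱ L̃ τ⁻ⁱ`. -/
theorem section_restriction_decomposition (p n : ℕ) (hp : 0 < p) (hn : 0 < n)
    (σ : F ≃ₐ[ℂ] F) (hσ : IsShiftA σ) (sc : F →+* F) (hsc : IsScale p sc)
    -- the operator `L`, of order `n`:
    (L : Module.End ℂ F) (hL : L ∈ Dop σ 1)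
    (aL : Fin (n + 1) → F) (hLrep : HasRep σ L n aL)
    (hL0 : aL 0 ≠ 0) (hLlead : aL (Fin.last n) ≠ 0)
    -- `ψ_p : D → D_p`, the isomorphism `τ ↦ τᵖ`, `x ↦ x/p`:
    (φ : Dop σ 1 →+* Dop σ p) (hbij : Function.Bijective φ)
    (hφmul : ∀ f : F, (φ (iota σ f) : Module.End ℂ F) = mulL (sc f))
    (hφτ : (φ ⟨shiftE σ, shiftE_mem σ⟩ : Module.End ℂ F) = shiftE σ ^ p)
    -- the section operator `Lp = L⁽ᵖ⁾` has order `n`: `ψ_p(Lp) ∈ D_p ∩ DL` is of minimal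
    -- order there:
    (Lp : Module.End ℂ F) (hLp : Lp ∈ Dop σ 1)
    (hsec : (⟨(φ ⟨Lp, hLp⟩ : Module.End ℂ F), Dop_le σ p (φ ⟨Lp, hLp⟩).2⟩ : Dop σ 1)
        ∈ Submodule.span (Dop σ 1) {(⟨L, hL⟩ : Dop σ 1)})
    (hmin : ∀ M : Dop σ 1, M ∈ Submodule.span (Dop σ 1) {(⟨L, hL⟩ : Dop σ 1)} →
      (M : Module.End ℂ F) ∈ Dop σ p → M ≠ 0 →
      ∀ (m : ℕ) (b : Fin (m + 1) → F), HasRep σ (M : Module.End ℂ F) m b →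
        b (Fin.last m) ≠ 0 → p * n ≤ m)
    (aLp : Fin (n + 1) → F) (hLprep : HasRep σ Lp n aLp) (hLplead : aLp (Fin.last n) ≠ 0)
    -- `L̃ ∈ D_p`, of order `n`, with `D/DL ≅ D/DL̃`:
    (Lt : Module.End ℂ F) (hLtp : Lt ∈ Dop σ p)
    (aLt : Fin (n + 1) → F) (hLtrep : HasRep σ Lt n aLt) (hLtlead : aLt (Fin.last n) ≠ 0)
    (hiso : Nonempty ((QuotD σ ⟨L, hL⟩) ≃ₗ[Dop σ 1] (QuotD σ ⟨Lt, Dop_le σ p hLtp⟩)))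
    -- the conjugates `L̃ᵢ = τⁱ L̃ τ⁻ⁱ` lie in `D_p`:
    (hconj : ∀ i : Fin p, shiftE σ ^ (i : ℕ) * Lt * shiftInvE σ ^ (i : ℕ) ∈ Dop σ p)
    -- the `ℂ(x)`-vector space structure of `D/DL̃` (via multiplication operators):
    [instF : Module F (QuotD σ ⟨Lt, Dop_le σ p hLtp⟩)]
    (hinstF : ∀ (f : F) (x : QuotD σ ⟨Lt, Dop_le σ p hLtp⟩), f • x = iota σ f • x)
    -- the restriction of `D/DL̃` to a `D_p`-module:
    [instDp : Module (Dop σ p) (QuotD σ ⟨Lt, Dop_le σ p hLtp⟩)]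
    (hinstDp : ∀ (d : Dop σ p) (x : QuotD σ ⟨Lt, Dop_le σ p hLtp⟩),
      d • x = Subring.inclusion (Dop_le σ p) d • x)
    -- the `ℂ(x)`-spans `Mᵢ` of the `τʲ` with `j ≡ i mod p`:
    (Mi : Fin p → Submodule F (QuotD σ ⟨Lt, Dop_le σ p hLtp⟩))
    (hMi : ∀ i, Mi i = Submodule.span F
      {x | ∃ j : Fin n, (j : ℕ) % p = (i : ℕ) ∧
        x = Submodule.Quotient.mk (⟨shiftE σ ^ (j : ℕ), pow_mem (shiftE_mem σ) _⟩ :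
          Dop σ 1)}) :
    -- each `Mᵢ` is a `D_p`-submodule:
    (∀ (i : Fin p) (d : Module.End ℂ F) (hd : d ∈ Dop σ p),
      ∀ x ∈ Mi i, (⟨d, Dop_le σ p hd⟩ : Dop σ 1) • x ∈ Mi i) ∧
    -- `D/DL̃` is their direct sum:
    (⨆ i, Mi i) = ⊤ ∧ iSupIndep Mi ∧
    -- and `Mᵢ ≅ D_p/D_p·L̃ᵢ` as `D_p`-modules:
    (∀ i : Fin p, ∃ Φ : ((Dop σ p) ⧸ Submodule.span (Dop σ p)
          {(⟨shiftE σ ^ (i : ℕ) * Lt * shiftInvE σ ^ (i : ℕ), hconj i⟩ : Dop σ p)})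
        →ₗ[Dop σ p] (QuotD σ ⟨Lt, Dop_le σ p hLtp⟩),
      Function.Injective Φ ∧ Set.range Φ = ↑(Mi i)) := by
  have hsm : ∀ (f : F) (v : Module.End ℂ F) (hv : v ∈ Dop σ 1) (hfv : f • v ∈ Dop σ 1),
      (Submodule.Quotient.mk (⟨f • v, hfv⟩ : Dop σ 1) : QuotD σ ⟨Lt, Dop_le σ p hLtp⟩)
        = f • (Submodule.Quotient.mk (⟨v, hv⟩ : Dop σ 1) : QuotD σ ⟨Lt, Dop_le σ p hLtp⟩) := by
    intro f v hv hfv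
    rw [hinstF, ← Submodule.Quotient.mk_smul]
    exact congrArg _ (Subtype.ext (mulL_mul f v).symm)
  have hlt : Lt = ∑ i : Fin (n + 1), aLt i • shiftE σ ^ (i : ℕ) := by
    have h := hLtrep
    rw [HasRep] at h
    rw [h]; simp only [mulL_mul]
  have hpn : n % p = 0 := rep_coeff σ hσ p n Lt hLtp aLt hLtrep (Fin.last n) hLtlead
  -- powers of the shift reduce into `M_i`
  have hpow : ∀ (k : ℕ) (i : Fin p), k % p = (i : ℕ) →
      (Submodule.Quotient.mk (⟨shiftE σ ^ k, pow_mem (shiftE_mem σ) _⟩ : Dop σ 1) :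
        QuotD σ ⟨Lt, Dop_le σ p hLtp⟩) ∈ Mi i := by
    intro k
    induction k using Nat.strong_induction_on with
    | _ k ih =>
      intro i hk
      by_cases hkn : k < n
      · rw [hMi]
        exact Submodule.subset_span ⟨⟨k, hkn⟩, hk, rfl⟩
      · push Not at hkn
        obtain ⟨r, rfl⟩ := Nat.exists_eq_add_of_le' hkn
        let T : ℕ → Dop σ 1 := fun k => ⟨shiftE σ ^ k, pow_mem (shiftE_mem σ) _⟩
        let q : Dop σ 1 → QuotD σ ⟨Lt, Dop_le σ p hLtp⟩ := Submodule.Quotient.mk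
        have h0 : (0 : QuotD σ ⟨Lt, Dop_le σ p hLtp⟩)
            = ∑ j : Fin (n + 1), ((σ ^ r) (aLt j)) • q (T (r + j)) := by
          have h1 : q (T r * ⟨Lt, Dop_le σ p hLtp⟩) = 0 := by
            refine (Submodule.Quotient.mk_eq_zero _).2 ?_
            rw [mem_ideal]
            exact ⟨_, (T r).2, rfl⟩
          have h2 : T r * ⟨Lt, Dop_le σ p hLtp⟩
              = ∑ j : Fin (n + 1), iota σ ((σ ^ r) (aLt j)) * T (r + j) := by
            apply Subtype.ext
            rw [AddSubmonoidClass.coe_finsetSum]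
            change shiftE σ ^ r * Lt = ∑ j : Fin (n + 1), mulL ((σ ^ r) (aLt j)) * shiftE σ ^ (r + (j : ℕ))
            conv_lhs => rw [hlt]
            rw [Finset.mul_sum]
            refine Finset.sum_congr rfl fun j _ => ?_
            rw [shiftE_pow_smul, mulL_mul, pow_add]
          rw [← h1, h2]
          change (Submodule.mkQ _) _ = _
          rw [map_sum]
          refine Finset.sum_congr rfl fun j _ => ?_
          rw [hinstF]
          rfl
        rw [Fin.sum_univ_castSucc] at h0
        have h3 := neg_eq_of_add_eq_zero_right h0.symm
        have hne : (σ ^ r) (aLt (Fin.last n)) ≠ 0 := by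
          exact (map_ne_zero_iff _ (σ ^ r).injective).2 hLtlead
        have h4 : (σ ^ r) (aLt (Fin.last n)) • q (T (r + n)) ∈ Mi i := by
          rw [Fin.val_last] at h3
          rw [← h3]
          refine neg_mem (sum_mem fun j _ => ?_)
          by_cases ha : aLt j.castSucc = 0
          · rw [ha, map_zero, zero_smul]; exact zero_mem _
          · refine Submodule.smul_mem _ _ (ih _ ?_ i ?_)
            · have := j.2; simp
            · have hj := rep_coeff σ hσ p n Lt hLtp aLt hLtrep _ ha
              rw [← hk, Nat.add_mod, hj, Nat.add_mod r n, hpn]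
        exact (Submodule.smul_mem_iff _ hne).1 h4
  have hVM : ∀ (i : Fin p) (v : Module.End ℂ F) (hv : v ∈ V σ p i) (hv1 : v ∈ Dop σ 1),
      (Submodule.Quotient.mk (⟨v, hv1⟩ : Dop σ 1) :
        QuotD σ ⟨Lt, Dop_le σ p hLtp⟩) ∈ Mi i := by
    intro i v hv
    induction hv using Submodule.span_induction with
    | mem x hx =>
      intro hv1
      obtain ⟨k, hk, rfl⟩ := hx
      exact hpow k i hk
    | zero =>
      intro hv1
      exact zero_mem (Mi i)
    | add x y hx hy h1 h2 =>
      intro hv1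
      exact add_mem (h1 (V_le σ p i x hx)) (h2 (V_le σ p i y hy))
    | smul f x hx h1 =>
      intro hv1
      rw [hsm f x (V_le σ p i x hx)]
      exact Submodule.smul_mem _ _ (h1 _)
  have hMV : ∀ (i : Fin p) (x : QuotD σ ⟨Lt, Dop_le σ p hLtp⟩), x ∈ Mi i →
      ∃ (v : Module.End ℂ F) (hv : v ∈ V σ p i),
        x = Submodule.Quotient.mk (⟨v, V_le σ p i v hv⟩ : Dop σ 1) := by
    intro i x hx
    rw [hMi] at hx
    induction hx using Submodule.span_induction with
    | mem x hx =>
      obtain ⟨j, hj, rfl⟩ := hx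
      exact ⟨shiftE σ ^ (j : ℕ), Submodule.subset_span ⟨j, hj, rfl⟩, rfl⟩
    | zero => exact ⟨0, zero_mem _, rfl⟩
    | add x y _ _ h1 h2 =>
      obtain ⟨v, hv, rfl⟩ := h1
      obtain ⟨w, hw, rfl⟩ := h2
      exact ⟨v + w, add_mem hv hw, rfl⟩
    | smul f x _ h1 =>
      obtain ⟨v, hv, rfl⟩ := h1
      exact ⟨f • v, Submodule.smul_mem _ _ hv, (hsm f v _ _).symm⟩
  refine ⟨?_, ?_, ?_, ?_⟩
  · intro i d hd x hx
    obtain ⟨v, hv, rfl⟩ := hMV i x hx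
    have h := V_mul σ p 0 i d v ((mem_Dop_iff σ p d).1 hd) hv
    rw [zero_add, Nat.mod_eq_of_lt i.2] at h
    exact hVM i _ h (V_le σ p i _ h)
  · rw [eq_top_iff]
    intro x _
    obtain ⟨⟨v, hv⟩, rfl⟩ := Submodule.Quotient.mk_surjective _ x
    have hv' := (mem_Dop_iff σ 1 v).1 hv
    clear * - hv' hsm hpow hp
    induction hv' using Submodule.span_induction with
    | mem x hx =>
      obtain ⟨k, hk, rfl⟩ := hx
      exact Submodule.mem_iSup_of_mem ⟨k % p, Nat.mod_lt k hp⟩ (hpow k _ rfl)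
    | zero => exact zero_mem (⨆ i, Mi i)
    | add x y hx hy h1 h2 =>
      exact add_mem (h1 ((mem_Dop_iff σ 1 x).2 hx)) (h2 ((mem_Dop_iff σ 1 y).2 hy))
    | smul f x hx h1 =>
      rw [hsm f x ((mem_Dop_iff σ 1 x).2 hx)]
      exact Submodule.smul_mem _ _ (h1 _)
  · intro i
    rw [Submodule.disjoint_def]
    intro x hx hx'
    let K : Submodule F (QuotD σ ⟨Lt, Dop_le σ p hLtp⟩) :=
      { carrier := {x | ∃ (w : Module.End ℂ F) (hw : w ∈ Dop σ 1), pr σ hσ p i w = 0 ∧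
          x = Submodule.Quotient.mk (⟨w, hw⟩ : Dop σ 1)}
        add_mem' := by
          rintro _ _ ⟨w, hw, h1, rfl⟩ ⟨w', hw', h1', rfl⟩
          exact ⟨w + w', add_mem hw hw', by rw [map_add, h1, h1', add_zero], rfl⟩
        zero_mem' := ⟨0, zero_mem _, map_zero _, rfl⟩
        smul_mem' := by
          rintro f _ ⟨w, hw, h1, rfl⟩
          have hfw : f • w ∈ Dop σ 1 := by
            rw [mem_Dop_iff] at hw ⊢
            exact Submodule.smul_mem _ _ hw
          exact ⟨f • w, hfw, by rw [map_smul, h1, smul_zero], (hsm f w hw hfw).symm⟩ }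
    have hK : (⨆ j, ⨆ (_ : j ≠ i), Mi j) ≤ K := by
      refine iSup_le fun j => iSup_le fun hj => ?_
      intro y hy
      obtain ⟨v, hv, rfl⟩ := hMV j y hy
      exact ⟨v, V_le σ p j v hv,
        pr_other σ hσ p i j (fun h => hj (Fin.ext h)) v hv, rfl⟩
    obtain ⟨w, hw, hw0, hxw⟩ := hK hx'
    obtain ⟨v, hv, rfl⟩ := hMV i x hx
    have h1 := (Submodule.Quotient.eq _).1 hxw
    rw [mem_ideal] at h1
    obtain ⟨e, he, h2⟩ := h1
    replace h2 : e * Lt = v - w := h2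
    have h3 := pr_mul σ hσ p i e Lt he hLtp
    rw [h2, map_sub, hw0, sub_zero, pr_self σ hσ p i v hv] at h3
    refine (Submodule.Quotient.mk_eq_zero _).2 ?_
    rw [mem_ideal]
    exact ⟨_, V_le σ p i _ (pr_mem σ hσ p i e he), h3.symm⟩
  · intro i
    have hT : shiftE σ ^ (i : ℕ) ∈ Dop σ 1 := pow_mem (shiftE_mem σ) _
    have hdT : ∀ d : Dop σ p, (d : Module.End ℂ F) * shiftE σ ^ (i : ℕ) ∈ Dop σ 1 :=
      fun d => mul_mem (Dop_le σ p d.2) hT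
    obtain ⟨Ψ, hΨ⟩ : ∃ Ψ : Dop σ p →ₗ[Dop σ p] (QuotD σ ⟨Lt, Dop_le σ p hLtp⟩),
        ∀ d : Dop σ p, Ψ d = Submodule.Quotient.mk
          (⟨(d : Module.End ℂ F) * shiftE σ ^ (i : ℕ), hdT d⟩ : Dop σ 1) := by
      refine ⟨LinearMap.toSpanSingleton (Dop σ p) _ (Submodule.Quotient.mk
        (⟨shiftE σ ^ (i : ℕ), hT⟩ : Dop σ 1)), fun d => ?_⟩
      rw [LinearMap.toSpanSingleton_apply, hinstDp]
      exact smul_mk_aux σ p Lt _ _ hT d (hdT d)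
    have hq : ∀ d : Dop σ p, Ψ d = 0 ↔
        ∃ e ∈ Dop σ 1, e * Lt = (d : Module.End ℂ F) * shiftE σ ^ (i : ℕ) := by
      intro d
      rw [hΨ d]
      exact mk_zero_iff σ Lt _ _ (hdT d)
    have hΨ0 : ∀ d : Dop σ p, Ψ d = 0 ↔ d ∈ Submodule.span (Dop σ p)
        {(⟨shiftE σ ^ (i : ℕ) * Lt * shiftInvE σ ^ (i : ℕ), hconj i⟩ : Dop σ p)} := by
      intro d
      rw [hq d, conj_aux σ hσ p i i.2 Lt d hLtp d.2, mem_ideal]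
    have hle : Submodule.span (Dop σ p)
        {(⟨shiftE σ ^ (i : ℕ) * Lt * shiftInvE σ ^ (i : ℕ), hconj i⟩ : Dop σ p)}
          ≤ LinearMap.ker Ψ := fun d hd => LinearMap.mem_ker.2 ((hΨ0 d).2 hd)
    have hge : LinearMap.ker Ψ ≤ Submodule.span (Dop σ p)
        {(⟨shiftE σ ^ (i : ℕ) * Lt * shiftInvE σ ^ (i : ℕ), hconj i⟩ : Dop σ p)} :=
      fun d hd => (hΨ0 d).1 (LinearMap.mem_ker.1 hd)
    have hr1 : ∀ d : Dop σ p, Ψ d ∈ Mi i := by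
      intro d
      have h := V_mul σ p _ _ _ _ ((mem_Dop_iff σ p d).1 d.2) (pow_mem_V σ p i)
      rw [zero_add, Nat.mod_mod, Nat.mod_eq_of_lt i.2] at h
      rw [hΨ]
      exact hVM i _ h (hdT d)
    have hr2 : ∀ x ∈ Mi i, ∃ d : Dop σ p, Ψ d = x := by
      intro x hx
      obtain ⟨v, hv, rfl⟩ := hMV i x hx
      obtain ⟨e, he, rfl⟩ := V_factor σ p i v hv
      refine ⟨⟨e, he⟩, ?_⟩
      rw [hΨ]
    exact lift_aux _ Ψ hle hge _ hr1 hr2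
end
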